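/- Fix constants C_{β₀}, C_u, C_η, c_η, C₁, C₂ > 0 with C_η > c_η, c_η < √((1/2)·min{τ², (1−τ)²}), and C₁ > √(C_u² + E[ε₁²] + C_{β₀}²). Let (β₀*, M_u*, ρ₁*) denote the unique minimizing triple of the asymptotic program and assume M_u* > 0; let M_η* denote the unique optimal value of M_η. Then ρ₁* satisfies the fixed-point equation ρ₁* = √( E[ (M_u* g₁ + ε₁ − β₀* − prox_{ℓ_τ}(M_u* g₁ + ε₁ − β₀*; ρ₁*/M_η*))² ] ), where prox_{ℓ_τ}(x; ρ) = argmin_v ((x − v)²/(2ρ)) + ℓ_τ(v) is the proximal operator of the pinball loss. -/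

import Mathlib

open MeasureTheory ProbabilityTheory Filter Finset

noncomputable section

/-- The pinball (quantile) loss `ℓ_τ(r) = τ·r − min{r, 0}`. -/
def pinball (τ r : ℝ) : ℝ := τ * r - min r 0

/-- The Moreau envelope of a scalar function, `e_f(x; ρ) = inf_v (x − v)²/(2ρ) + f(v)` for
`ρ > 0`, continuously extended by `e_f(x; 0) = f(x)`. -/
def moreau (f : ℝ → ℝ) (x ρ : ℝ) : ℝ :=
  if ρ = 0 then f x else ⨅ v : ℝ, ((x - v) ^ 2 / (2 * ρ) + f v)

/-- The convex (Fenchel) conjugate of a scalar function, with values in `EReal`. -/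
def conjE (f : ℝ → ℝ) (x : ℝ) : EReal := ⨆ v : ℝ, ((v * x - f v : ℝ) : EReal)

/-- The Moreau envelope of the convex conjugate `f*` of a scalar function `f`. -/
def moreauConj (f : ℝ → ℝ) (x ρ : ℝ) : ℝ :=
  (⨅ v : ℝ, ((((x - v) ^ 2 / (2 * ρ) : ℝ) : EReal) + conjE f v)).toReal

/-- Assumptions on the noise distribution `P_ε`: mean zero, finite second moment and a bounded,
continuous density that is positive on all of `ℝ` (hence, in particular, continuous). -/
structure NoiseAssumption (Pε : Measure ℝ) : Prop where
  mean_zero : ∫ x, x ∂Pε = 0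
  second_moment : Integrable (fun x => x ^ 2) Pε
  density : ∃ f : ℝ → ℝ, Continuous f ∧ (∀ x, 0 < f x) ∧ (∃ C, ∀ x, f x ≤ C) ∧
    Pε = volume.withDensity fun x => ENNReal.ofReal (f x)

/-- The deterministic asymptotic objective
`A(β₀, M_u, ρ₁, M_η, ρ₂) = E[e_{ℓ_τ}(M_u g₁ + ε₁ − β₀; ρ₁/M_η)] − M_η² M_u γ/(2ρ₂)
  + γ E[e_ν((M_η M_u/ρ₂) h₁ + γ √d β̃₁; M_u/ρ₂)] + M_η ρ₁/2 − M_u ρ₂/2`,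
where `(g₁, ε₁) ∼ N(0,1) ⊗ P_ε` and `(h₁, √d β̃₁) ∼ N(0,1) ⊗ P_β`. -/
def asymObj (τ γ : ℝ) (Pε Pβ : Measure ℝ) (ν : ℝ → ℝ) (β₀ Mu ρ₁ Mη ρ₂ : ℝ) : ℝ :=
  (∫ z, moreau (pinball τ) (Mu * z.1 + z.2 - β₀) (ρ₁ / Mη) ∂((gaussianReal 0 1).prod Pε))
    - Mη ^ 2 * Mu * γ / (2 * ρ₂)
    + γ * (∫ z, moreau ν (Mη * Mu / ρ₂ * z.1 + γ * z.2) (Mu / ρ₂)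
        ∂((gaussianReal 0 1).prod Pβ))
    + Mη * ρ₁ / 2 - Mu * ρ₂ / 2

/-- The inner maximum of the asymptotic objective over `M_η ∈ [c_η, C_η]` and `ρ₂ ∈ (0, C₂]`,
as a function of `(β₀, M_u, ρ₁)`. -/
def asymFmax (τ γ : ℝ) (Pε Pβ : Measure ℝ) (ν : ℝ → ℝ) (cη Cη C₂ : ℝ)
    (p : ℝ × ℝ × ℝ) : ℝ :=
  sSup ((fun q : ℝ × ℝ => asymObj τ γ Pε Pβ ν p.1 p.2.1 p.2.2 q.1 q.2) ''
    (Set.Icc cη Cη ×ˢ Set.Ioc (0 : ℝ) C₂))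

/-- The constraint box `{|β₀| ≤ C_{β₀}} × {0 ≤ M_u ≤ C_u} × {0 ≤ ρ₁ ≤ C₁}` of the outer
minimization of the asymptotic program. -/
def asymBox (Cβ0 Cu C₁ : ℝ) : Set (ℝ × ℝ × ℝ) :=
  Set.Icc (-Cβ0) Cβ0 ×ˢ Set.Icc (0 : ℝ) Cu ×ˢ Set.Icc (0 : ℝ) C₁

/-- Parts (v) and (vi) of the regularizer assumption, stated for the limiting scalar penalty `ν`:
there exist a.e. first and second derivatives `D1, D2` of `x ↦ e_{ν*}(x; ρ)` satisfying the
differentiation-under-the-integral / Stein identities, and the expected second derivative is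
bounded away from zero on compacts. -/
def ConjDerivAssumption (γ : ℝ) (Pβ : Measure ℝ) (ν : ℝ → ℝ) : Prop :=
  ∃ D1 D2 : ℝ → ℝ → ℝ,
    (∀ ρ > (0 : ℝ),
      (∀ᵐ x ∂(volume : Measure ℝ), HasDerivAt (fun t => moreauConj ν t ρ) (D1 x ρ) x) ∧
      (∀ᵐ x ∂(volume : Measure ℝ), HasDerivAt (fun t => D1 t ρ) (D2 x ρ) x) ∧
      (∀ c : ℝ,
        HasDerivAt (fun c' => ∫ z, moreauConj ν (c' * z.1 + ρ * γ * z.2) ρ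
            ∂((gaussianReal 0 1).prod Pβ))
          (∫ z, z.1 * D1 (c * z.1 + ρ * γ * z.2) ρ ∂((gaussianReal 0 1).prod Pβ)) c ∧
        (∫ z, z.1 * D1 (c * z.1 + ρ * γ * z.2) ρ ∂((gaussianReal 0 1).prod Pβ))
          = c * ∫ z, D2 (c * z.1 + ρ * γ * z.2) ρ ∂((gaussianReal 0 1).prod Pβ))) ∧
    (∀ A : Set ℝ, IsCompact A → A ⊆ Set.Ioi 0 → ∀ Cρ > (0 : ℝ), ∃ m > (0 : ℝ),
      ∀ c ∈ A, ∀ ρ ∈ Set.Ioc (0 : ℝ) Cρ,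
        m ≤ ∫ z, D2 (c * z.1 + ρ * γ * z.2) ρ ∂((gaussianReal 0 1).prod Pβ))

/-- The outer function of the `M_η`-maximization:
`G(M_η) = max_{ρ₂ ∈ (0,C₂]} min_{(β₀,M_u,ρ₁) ∈ box} A(β₀, M_u, ρ₁, M_η, ρ₂)`. -/
def asymG (τ γ : ℝ) (Pε Pβ : Measure ℝ) (ν : ℝ → ℝ) (Cβ0 Cu C₁ C₂ : ℝ) (Mη : ℝ) : ℝ :=
  sSup ((fun ρ₂ =>
      sInf ((fun p : ℝ × ℝ × ℝ => asymObj τ γ Pε Pβ ν p.1 p.2.1 p.2.2 Mη ρ₂) ''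
        asymBox Cβ0 Cu C₁)) '' Set.Ioc (0 : ℝ) C₂)

/-- The proximal operator of the pinball loss:
`prox_{ℓ_τ}(x; ρ) = argmin_v (x − v)²/(2ρ) + ℓ_τ(v)`. -/
def proxPinball (τ x ρ : ℝ) : ℝ :=
  if ρ * τ < x then x - ρ * τ else if x < -(ρ * (1 - τ)) then x + ρ * (1 - τ) else 0


lemma moreau_bddBelow {f : ℝ → ℝ} (hf : ConvexOn ℝ Set.univ f) (x : ℝ) {ρ : ℝ} (hρ : 0 < ρ) :
    BddBelow (Set.range fun v : ℝ => (x - v) ^ 2 / (2 * ρ) + f v) := by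
  have hc : Continuous f := by
    have := hf.continuousOn isOpen_univ
    rwa [← continuousOn_univ]
  obtain ⟨c, c', h⟩ := hf.exists_affine_le_real isClosed_univ
    hc.continuousOn.lowerSemicontinuousOn
  refine ⟨c * x - ρ * c ^ 2 / 2 + c', ?_⟩
  rintro _ ⟨v, rfl⟩
  have h1 := h v (Set.mem_univ v)
  have h2 : (x - v) ^ 2 / (2 * ρ) - (c * (x - v) - ρ * c ^ 2 / 2) = (x - v - ρ * c) ^ 2 / (2 * ρ) := by
    field_simp
    ring
  have h3 : 0 ≤ (x - v - ρ * c) ^ 2 / (2 * ρ) := by positivity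
  simp only
  nlinarith

lemma moreau_le {f : ℝ → ℝ} (hf : ConvexOn ℝ Set.univ f) (x : ℝ) {ρ : ℝ} (hρ : 0 ≤ ρ) (v : ℝ)
    (hv : ρ = 0 → v = x) : moreau f x ρ ≤ (x - v) ^ 2 / (2 * ρ) + f v := by
  unfold moreau
  split_ifs with h
  · simp [h, hv h]
  · exact ciInf_le (moreau_bddBelow hf x (lt_of_le_of_ne hρ (Ne.symm h))) v

lemma moreau_approx (f : ℝ → ℝ) (x ρ : ℝ) {δ : ℝ} (hδ : 0 < δ) :
    ∃ v, (ρ = 0 → v = x) ∧ (x - v) ^ 2 / (2 * ρ) + f v < moreau f x ρ + δ := by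
  unfold moreau
  split_ifs with h
  · exact ⟨x, fun _ => rfl, by simp [hδ]⟩
  · obtain ⟨v, hv⟩ := exists_lt_of_ciInf_lt (lt_add_of_pos_right
      (⨅ v : ℝ, ((x - v) ^ 2 / (2 * ρ) + f v)) hδ)
    exact ⟨v, fun h' => absurd h' h, hv⟩

lemma persp_ineq {a b u₁ u₂ r₁ r₂ : ℝ} (ha : 0 ≤ a) (hb : 0 ≤ b) (h₁ : 0 ≤ r₁) (h₂ : 0 ≤ r₂)
    (hu₁ : r₁ = 0 → u₁ = 0) (hu₂ : r₂ = 0 → u₂ = 0) :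
    (a * u₁ + b * u₂) ^ 2 / (2 * (a * r₁ + b * r₂)) ≤
      a * (u₁ ^ 2 / (2 * r₁)) + b * (u₂ ^ 2 / (2 * r₂)) := by
  have key : ∀ a u r : ℝ, 0 ≤ a → 0 ≤ r → (a * u) ^ 2 / (2 * (a * r)) = a * (u ^ 2 / (2 * r)) := by
    intro a u r ha hr
    rcases ha.eq_or_lt with rfl | ha
    · simp
    rcases hr.eq_or_lt with rfl | hr
    · simp
    field_simp
  rcases h₁.eq_or_lt with h | h₁
  · subst h; simp only [hu₁ rfl, mul_zero, zero_add]
    rw [key b u₂ r₂ hb h₂]; simp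
  rcases h₂.eq_or_lt with h | h₂
  · subst h; simp only [hu₂ rfl, mul_zero, add_zero]
    rw [key a u₁ r₁ ha h₁.le]; simp
  have hs : 0 ≤ a * r₁ + b * r₂ := by positivity
  rcases hs.eq_or_lt with h | hs
  · rw [← h]; simp; positivity
  rw [div_le_iff₀ (by positivity)]
  have : (a * (u₁ ^ 2 / (2 * r₁)) + b * (u₂ ^ 2 / (2 * r₂))) * (2 * (a * r₁ + b * r₂))
     - (a * u₁ + b * u₂) ^ 2 = a * b * (u₁ * r₂ - u₂ * r₁) ^ 2 / (r₁ * r₂) := by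
    field_simp
    ring
  have h' : 0 ≤ a * b * (u₁ * r₂ - u₂ * r₁) ^ 2 / (r₁ * r₂) := by positivity
  linarith

lemma moreau_convex {f : ℝ → ℝ} (hf : ConvexOn ℝ Set.univ f) {a b x₁ x₂ r₁ r₂ : ℝ}
    (ha : 0 ≤ a) (hb : 0 ≤ b) (hab : a + b = 1) (h₁ : 0 ≤ r₁) (h₂ : 0 ≤ r₂) :
    moreau f (a * x₁ + b * x₂) (a * r₁ + b * r₂) ≤ a * moreau f x₁ r₁ + b * moreau f x₂ r₂ := by
  apply le_of_forall_pos_le_add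
  intro δ hδ
  obtain ⟨v₁, hv₁, hv₁'⟩ := moreau_approx f x₁ r₁ hδ
  obtain ⟨v₂, hv₂, hv₂'⟩ := moreau_approx f x₂ r₂ hδ
  have h0 : a * r₁ + b * r₂ = 0 → a * v₁ + b * v₂ = a * x₁ + b * x₂ := by
    intro h
    have e1 : a * r₁ = 0 := by nlinarith [mul_nonneg ha h₁, mul_nonneg hb h₂]
    have e2 : b * r₂ = 0 := by nlinarith [mul_nonneg ha h₁, mul_nonneg hb h₂]
    have e3 : a * v₁ = a * x₁ := by
      rcases mul_eq_zero.1 e1 with h | h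
      · simp [h]
      · rw [hv₁ h]
    have e4 : b * v₂ = b * x₂ := by
      rcases mul_eq_zero.1 e2 with h | h
      · simp [h]
      · rw [hv₂ h]
    rw [e3, e4]
  have h3 := moreau_le hf (a * x₁ + b * x₂) (by positivity) (a * v₁ + b * v₂) h0
  have h4 := hf.2 (Set.mem_univ v₁) (Set.mem_univ v₂) ha hb hab
  simp only [smul_eq_mul] at h4
  have h5 := persp_ineq ha hb h₁ h₂ (u₁ := x₁ - v₁) (u₂ := x₂ - v₂)
    (fun h => by rw [hv₁ h, sub_self]) (fun h => by rw [hv₂ h, sub_self])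
  rw [show a * (x₁ - v₁) + b * (x₂ - v₂) = a * x₁ + b * x₂ - (a * v₁ + b * v₂) by ring] at h5
  have h6 := mul_le_mul_of_nonneg_left hv₁'.le ha
  have h7 := mul_le_mul_of_nonneg_left hv₂'.le hb
  have h8 : a * δ + b * δ = δ := by rw [← add_mul, hab, one_mul]
  linarith

lemma moreau_concave_eta {f : ℝ → ℝ} (hf : ConvexOn ℝ Set.univ f) {a b x r m₁ m₂ : ℝ}
    (ha : 0 ≤ a) (hb : 0 ≤ b) (hab : a + b = 1) (hr : 0 ≤ r) (h₁ : 0 < m₁) (h₂ : 0 < m₂) :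
    a * moreau f x (r / m₁) + b * moreau f x (r / m₂) ≤ moreau f x (r / (a * m₁ + b * m₂)) := by
  have hm : 0 < a * m₁ + b * m₂ := by
    rcases ha.eq_or_lt with rfl | ha
    · have : b = 1 := by linarith
      subst this; simpa using h₂
    · positivity
  apply le_of_forall_pos_le_add
  intro δ hδ
  obtain ⟨v, hv, hv'⟩ := moreau_approx f x (r / (a * m₁ + b * m₂)) hδ
  have hz : ∀ m : ℝ, r / m = 0 → 0 < m → r = 0 := by
    intro m h hm
    rcases div_eq_zero_iff.1 h with h | h
    · exact h
    · exact absurd h hm.ne'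
  have hv0 : r = 0 → v = x := fun h => hv (by simp [h])
  have e1 := moreau_le hf x (ρ := r / m₁) (by positivity) v (fun h => hv0 (hz _ h h₁))
  have e2 := moreau_le hf x (ρ := r / m₂) (by positivity) v (fun h => hv0 (hz _ h h₂))
  have e3 : ∀ m : ℝ, (x - v) ^ 2 / (2 * (r / m)) = m * ((x - v) ^ 2 / (2 * r)) := by
    intro m
    rw [← mul_div_assoc, div_div_eq_mul_div]
    ring
  rw [e3] at e1 e2 hv'
  have h6 := mul_le_mul_of_nonneg_left e1 ha
  have h7 := mul_le_mul_of_nonneg_left e2 hb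
  have h8 : a * f v + b * f v = f v := by rw [← add_mul, hab, one_mul]
  linarith

lemma moreau_concave_rho {f : ℝ → ℝ} (hf : ConvexOn ℝ Set.univ f) {a b h w M m₁ m₂ r₁ r₂ : ℝ}
    (ha : 0 ≤ a) (hb : 0 ≤ b) (hab : a + b = 1) (hM : 0 ≤ M) (hr₁ : 0 < r₁) (hr₂ : 0 < r₂) :
    a * (moreau f (m₁ * M / r₁ * h + w) (M / r₁) - m₁ ^ 2 * M / (2 * r₁) * h ^ 2)
     + b * (moreau f (m₂ * M / r₂ * h + w) (M / r₂) - m₂ ^ 2 * M / (2 * r₂) * h ^ 2) ≤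
     moreau f ((a * m₁ + b * m₂) * M / (a * r₁ + b * r₂) * h + w) (M / (a * r₁ + b * r₂))
      - (a * m₁ + b * m₂) ^ 2 * M / (2 * (a * r₁ + b * r₂)) * h ^ 2 := by
  rcases hM.eq_or_lt with rfl | hM
  · simp only [mul_zero, zero_div, zero_mul, zero_add, sub_zero]
    rw [← add_mul, hab, one_mul]
  have hr : 0 < a * r₁ + b * r₂ := by
    rcases ha.eq_or_lt with rfl | ha
    · have : b = 1 := by linarith
      subst this; simpa using hr₂
    · positivity
  apply le_of_forall_pos_le_add
  intro δ hδ
  obtain ⟨v, hv, hv'⟩ := moreau_approx f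
    ((a * m₁ + b * m₂) * M / (a * r₁ + b * r₂) * h + w) (M / (a * r₁ + b * r₂)) hδ
  have e1 := moreau_le hf (m₁ * M / r₁ * h + w) (ρ := M / r₁) (by positivity) v
    (fun h => absurd h (by positivity))
  have e2 := moreau_le hf (m₂ * M / r₂ * h + w) (ρ := M / r₂) (by positivity) v
    (fun h => absurd h (by positivity))
  have e3 : ∀ m r : ℝ, 0 < r → (m * M / r * h + w - v) ^ 2 / (2 * (M / r)) =
      m ^ 2 * M / (2 * r) * h ^ 2 + m * (h * (w - v)) + r * ((w - v) ^ 2 / (2 * M)) := by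
    intro m r hr
    field_simp
    ring
  rw [e3 _ _ hr₁] at e1
  rw [e3 _ _ hr₂] at e2
  rw [e3 _ _ hr] at hv'
  have e1' : moreau f (m₁ * M / r₁ * h + w) (M / r₁) - m₁ ^ 2 * M / (2 * r₁) * h ^ 2 ≤
      m₁ * (h * (w - v)) + r₁ * ((w - v) ^ 2 / (2 * M)) + f v := by linarith
  have e2' : moreau f (m₂ * M / r₂ * h + w) (M / r₂) - m₂ ^ 2 * M / (2 * r₂) * h ^ 2 ≤
      m₂ * (h * (w - v)) + r₂ * ((w - v) ^ 2 / (2 * M)) + f v := by linarith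
  have h6 := mul_le_mul_of_nonneg_left e1' ha
  have h7 := mul_le_mul_of_nonneg_left e2' hb
  have h8 : a * f v + b * f v = f v := by rw [← add_mul, hab, one_mul]
  linarith

lemma pinball_convex (τ : ℝ) : ConvexOn ℝ Set.univ (pinball τ) := by
  refine ⟨convex_univ, ?_⟩
  intro x _ y _ a b ha hb hab
  simp only [pinball, smul_eq_mul]
  have h1 : a * min x 0 + b * min y 0 ≤ min (a * x + b * y) 0 := by
    apply le_min
    · exact add_le_add (mul_le_mul_of_nonneg_left (min_le_left _ _) ha)
        (mul_le_mul_of_nonneg_left (min_le_left _ _) hb)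
    · have := mul_le_mul_of_nonneg_left (min_le_right x 0) ha
      have := mul_le_mul_of_nonneg_left (min_le_right y 0) hb
      linarith
  linarith

lemma pinball_ge {τ s : ℝ} (hs : s ∈ Set.Icc (τ - 1) τ) (x : ℝ) : s * x ≤ pinball τ x := by
  unfold pinball
  obtain ⟨h1, h2⟩ := hs
  rcases le_total x 0 with h | h
  · rw [min_eq_left h]; nlinarith
  · rw [min_eq_right h]; nlinarith

/-- the clipped score -/
def clipS (τ x ρ : ℝ) : ℝ := max (τ - 1) (min (x / ρ) τ)

lemma clipS_mem (τ x ρ : ℝ) : clipS τ x ρ ∈ Set.Icc (τ - 1) τ := by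
  unfold clipS
  exact ⟨le_max_left _ _, max_le (by linarith) (min_le_right _ _)⟩

lemma moreau_pin_ge {τ s : ℝ} (hs : s ∈ Set.Icc (τ - 1) τ) (x : ℝ) {ρ : ℝ} (hρ : 0 ≤ ρ) :
    s * x - ρ * s ^ 2 / 2 ≤ moreau (pinball τ) x ρ := by
  unfold moreau
  split_ifs with h
  · subst h; simpa using pinball_ge hs x
  · have hρ : 0 < ρ := lt_of_le_of_ne hρ (Ne.symm h)
    apply le_ciInf
    intro v
    have h1 := pinball_ge hs v
    have h2 : (x - v) ^ 2 / (2 * ρ) - (s * (x - v) - ρ * s ^ 2 / 2)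
        = (x - v - ρ * s) ^ 2 / (2 * ρ) := by
      field_simp
      ring
    have h3 : 0 ≤ (x - v - ρ * s) ^ 2 / (2 * ρ) := by positivity
    linarith

lemma sub_prox {τ x ρ : ℝ} (hρ : 0 < ρ) :
    x - proxPinball τ x ρ = ρ * clipS τ x ρ := by
  unfold proxPinball clipS
  split_ifs with h1 h2
  · rw [min_eq_right (by rw [le_div_iff₀ hρ]; linarith), max_eq_right (by linarith)]; ring
  · rw [max_eq_left]
    · ring
    · apply (min_le_left _ _).trans
      rw [div_le_iff₀ hρ]; linarith
  · rw [min_eq_left (by rw [div_le_iff₀ hρ]; linarith), max_eq_right (by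
      rw [le_div_iff₀ hρ]; linarith)]
    field_simp
    ring

lemma pinball_prox {τ x ρ : ℝ} (hτ : τ ∈ Set.Ioo (0 : ℝ) 1) (hρ : 0 < ρ) :
    pinball τ (proxPinball τ x ρ) = clipS τ x ρ * proxPinball τ x ρ := by
  obtain ⟨t0, t1⟩ := hτ
  have hs := sub_prox (τ := τ) (x := x) hρ
  unfold proxPinball at *
  split_ifs at * with h1 h2
  · have e : clipS τ x ρ = τ := by
      have : ρ * (clipS τ x ρ - τ) = 0 := by linarith
      rcases mul_eq_zero.1 this with h | h <;> linarith
    rw [e, pinball, min_eq_right (by linarith)]; ring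
  · have e : clipS τ x ρ = τ - 1 := by
      have : ρ * (clipS τ x ρ - (τ - 1)) = 0 := by linarith
      rcases mul_eq_zero.1 this with h | h <;> linarith
    rw [e, pinball, min_eq_left (by linarith)]; ring
  · simp [pinball]

lemma moreau_pin_eq {τ x ρ : ℝ} (hτ : τ ∈ Set.Ioo (0 : ℝ) 1) (hρ : 0 < ρ) :
    moreau (pinball τ) x ρ = clipS τ x ρ * x - ρ * (clipS τ x ρ) ^ 2 / 2 := by
  apply le_antisymm _ (moreau_pin_ge (clipS_mem τ x ρ) x hρ.le)
  have h := moreau_le (pinball_convex τ) x hρ.le (proxPinball τ x ρ) (fun h => absurd h hρ.ne')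
  rw [pinball_prox hτ hρ, sub_prox hρ] at h
  refine h.trans (le_of_eq ?_)
  have : proxPinball τ x ρ = x - ρ * clipS τ x ρ := by rw [← sub_prox hρ]; ring
  rw [this]
  field_simp
  ring

lemma moreau_pin_exists {τ : ℝ} (hτ : τ ∈ Set.Ioo (0 : ℝ) 1) (x : ℝ) {ρ : ℝ} (hρ : 0 ≤ ρ) :
    ∃ s ∈ Set.Icc (τ - 1) τ, moreau (pinball τ) x ρ = s * x - ρ * s ^ 2 / 2 := by
  rcases hρ.eq_or_lt with rfl | hρ
  · simp only [moreau, if_true, pinball]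
    rcases le_total x 0 with h | h
    · exact ⟨τ - 1, ⟨le_rfl, by linarith⟩, by rw [min_eq_left h]; ring⟩
    · exact ⟨τ, ⟨by linarith, le_rfl⟩, by rw [min_eq_right h]; ring⟩
  · exact ⟨_, clipS_mem τ x ρ, moreau_pin_eq hτ hρ⟩

lemma abs_le_one_of_mem {τ s : ℝ} (hτ : τ ∈ Set.Ioo (0 : ℝ) 1) (hs : s ∈ Set.Icc (τ - 1) τ) :
    |s| ≤ 1 := abs_le.2 ⟨by linarith [hs.1, hτ.1], by linarith [hs.2, hτ.2]⟩

lemma moreau_pin_sub_le {τ : ℝ} (hτ : τ ∈ Set.Ioo (0 : ℝ) 1) (x y : ℝ) {ρ r : ℝ} (hρ : 0 ≤ ρ)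
    (hr : 0 ≤ r) :
    moreau (pinball τ) x ρ - moreau (pinball τ) y r ≤ |x - y| + |ρ - r| := by
  obtain ⟨s, hs, h⟩ := moreau_pin_exists hτ x hρ
  have h1 := moreau_pin_ge hs y hr
  have h2 := abs_le_one_of_mem hτ hs
  have h3 : s * (x - y) ≤ |x - y| := by
    calc s * (x - y) ≤ |s * (x - y)| := le_abs_self _
      _ = |s| * |x - y| := abs_mul _ _
      _ ≤ 1 * |x - y| := by gcongr
      _ = _ := one_mul _
  have h4 : -((ρ - r) * (s ^ 2 / 2)) ≤ |ρ - r| := by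
    calc -((ρ - r) * (s ^ 2 / 2)) ≤ |(ρ - r) * (s ^ 2 / 2)| := neg_le_abs _
      _ = |ρ - r| * (s ^ 2 / 2) := by rw [abs_mul, abs_of_nonneg (a := s ^ 2 / 2) (by positivity)]
      _ ≤ |ρ - r| * 1 := by
        gcongr
        have := (sq_le_one_iff_abs_le_one s).2 h2
        linarith
      _ = _ := mul_one _
  linarith

lemma moreau_pin_lip {τ : ℝ} (hτ : τ ∈ Set.Ioo (0 : ℝ) 1) (x y : ℝ) {ρ r : ℝ} (hρ : 0 ≤ ρ)
    (hr : 0 ≤ r) :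
    |moreau (pinball τ) x ρ - moreau (pinball τ) y r| ≤ |x - y| + |ρ - r| := by
  rw [abs_le]
  have h1 := moreau_pin_sub_le hτ x y hρ hr
  have h2 := moreau_pin_sub_le hτ y x hr hρ
  rw [abs_sub_comm y x, abs_sub_comm r ρ] at h2
  constructor <;> linarith

lemma moreau_pin_abs {τ : ℝ} (hτ : τ ∈ Set.Ioo (0 : ℝ) 1) (x : ℝ) {ρ : ℝ} (hρ : 0 ≤ ρ) :
    |moreau (pinball τ) x ρ| ≤ |x| + ρ := by
  have h := moreau_pin_lip hτ x 0 hρ le_rfl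
  have h0 : moreau (pinball τ) 0 0 = 0 := by simp [moreau, pinball]
  rw [h0] at h
  simpa [abs_of_nonneg hρ] using h

lemma moreau_pin_continuousOn {τ : ℝ} (hτ : τ ∈ Set.Ioo (0 : ℝ) 1) :
    ContinuousOn (fun q : ℝ × ℝ => moreau (pinball τ) q.1 q.2) (Set.univ ×ˢ Set.Ici 0) := by
  have : LipschitzOnWith 2 (fun q : ℝ × ℝ => moreau (pinball τ) q.1 q.2)
      (Set.univ ×ˢ Set.Ici 0) := by
    apply LipschitzOnWith.of_dist_le_mul
    rintro ⟨x, ρ⟩ ⟨_, hx⟩ ⟨y, r⟩ ⟨_, hy⟩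
    have h := moreau_pin_lip hτ x y (ρ := ρ) (r := r) hx hy
    rw [Prod.dist_eq]
    simp only [Real.dist_eq, NNReal.coe_ofNat]
    have := le_max_left |x - y| |ρ - r|
    have := le_max_right |x - y| |ρ - r|
    linarith
  exact this.continuousOn

section integrals

variable (P : Measure ℝ) [IsProbabilityMeasure P]

lemma gauss_int : Integrable (fun x : ℝ => x) (gaussianReal 0 1) :=
  (memLp_id_gaussianReal 1).integrable le_rfl

lemma gauss_int_sq : Integrable (fun x : ℝ => x ^ 2) (gaussianReal 0 1) :=
  (memLp_id_gaussianReal 2).integrable_sq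

lemma gauss_sq : ∫ x : ℝ, x ^ 2 ∂(gaussianReal 0 1) = 1 := by
  have h := variance_fun_id_gaussianReal (μ := 0) (v := 1)
  rw [variance_of_integral_eq_zero (by fun_prop) (by simp)] at h
  simpa using h

lemma prod_int_fst : Integrable (fun z : ℝ × ℝ => z.1) ((gaussianReal 0 1).prod P) :=
  gauss_int.comp_fst P

lemma prod_int_fst_sq : Integrable (fun z : ℝ × ℝ => z.1 ^ 2) ((gaussianReal 0 1).prod P) :=
  gauss_int_sq.comp_fst P

lemma prod_fst_sq : ∫ z : ℝ × ℝ, z.1 ^ 2 ∂((gaussianReal 0 1).prod P) = 1 := by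
  rw [integral_fun_fst (fun x : ℝ => x ^ 2), gauss_sq]; simp

variable {P}

lemma int_of_sq (h2 : Integrable (fun x => x ^ 2) P) : Integrable (fun x : ℝ => x) P := by
  have : MemLp (fun x : ℝ => x) 2 P := (memLp_two_iff_integrable_sq (by fun_prop)).2 h2
  exact this.integrable (by norm_num)

lemma prod_int_snd (h2 : Integrable (fun x => x ^ 2) P) :
    Integrable (fun z : ℝ × ℝ => z.2) ((gaussianReal 0 1).prod P) :=
  (int_of_sq h2).comp_snd _

lemma prod_int_snd_sq (h2 : Integrable (fun x => x ^ 2) P) :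
    Integrable (fun z : ℝ × ℝ => z.2 ^ 2) ((gaussianReal 0 1).prod P) :=
  h2.comp_snd _

lemma int_sq_expand (M b : ℝ) (h2 : Integrable (fun x => x ^ 2) P) (h0 : ∫ x, x ∂P = 0) :
    Integrable (fun z : ℝ × ℝ => (M * z.1 + z.2 - b) ^ 2) ((gaussianReal 0 1).prod P) ∧
    ∫ z : ℝ × ℝ, (M * z.1 + z.2 - b) ^ 2 ∂((gaussianReal 0 1).prod P)
      = M ^ 2 + (∫ x, x ^ 2 ∂P) + b ^ 2 := by
  have e : (fun z : ℝ × ℝ => (M * z.1 + z.2 - b) ^ 2) = fun z =>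
      (M ^ 2 * z.1 ^ 2 + z.2 ^ 2 + b ^ 2) +
        (2 * M * (z.1 * z.2) + ((- 2 * M * b) * z.1 + (- 2 * b) * z.2)) := by
    funext z; ring
  have i1 := (prod_int_fst_sq P).const_mul (M ^ 2)
  have i2 := prod_int_snd_sq h2
  have i3 : Integrable (fun _ : ℝ × ℝ => b ^ 2) ((gaussianReal 0 1).prod P) := integrable_const _
  have i4 : Integrable (fun z : ℝ × ℝ => 2 * M * (z.1 * z.2)) ((gaussianReal 0 1).prod P) :=
    (gauss_int.mul_prod (int_of_sq h2)).const_mul (2 * M)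
  have i5 := (prod_int_fst P).const_mul (-2 * M * b)
  have i6 := (prod_int_snd h2).const_mul (-2 * b)
  rw [e]
  have j1 : Integrable (fun z : ℝ × ℝ => M ^ 2 * z.1 ^ 2 + z.2 ^ 2)
    ((gaussianReal 0 1).prod P) := i1.add i2
  have j2 : Integrable (fun z : ℝ × ℝ => M ^ 2 * z.1 ^ 2 + z.2 ^ 2 + b ^ 2)
    ((gaussianReal 0 1).prod P) := j1.add i3
  have j3 : Integrable (fun z : ℝ × ℝ => (- 2 * M * b) * z.1 + (- 2 * b) * z.2)
    ((gaussianReal 0 1).prod P) := i5.add i6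
  have j4 : Integrable (fun z : ℝ × ℝ => 2 * M * (z.1 * z.2) +
    ((- 2 * M * b) * z.1 + (- 2 * b) * z.2)) ((gaussianReal 0 1).prod P) := i4.add j3
  refine ⟨j2.add j4, ?_⟩
  rw [integral_add j2 j4, integral_add j1 i3,
    integral_add i1 i2, integral_add i4 j3, integral_add i5 i6]
  simp only [integral_const_mul]
  rw [prod_fst_sq, integral_prod_mul (fun x : ℝ => x) (fun x : ℝ => x), h0,
    integral_fun_fst (fun x : ℝ => x), integral_fun_snd (fun x : ℝ => x), h0,
    integral_fun_snd (fun x : ℝ => x ^ 2), integral_id_gaussianReal]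
  simp

lemma pin_meas {τ : ℝ} (hτ : τ ∈ Set.Ioo (0 : ℝ) 1) (M b : ℝ) {ρ : ℝ} (hρ : 0 ≤ ρ) :
    Continuous (fun z : ℝ × ℝ => moreau (pinball τ) (M * z.1 + z.2 - b) ρ) := by
  have := (moreau_pin_continuousOn hτ).comp_continuous
    (f := fun z : ℝ × ℝ => (M * z.1 + z.2 - b, ρ)) (by fun_prop) (fun z => ⟨Set.mem_univ _, hρ⟩)
  exact this

lemma bound_int (A B C : ℝ) (h2 : Integrable (fun x => x ^ 2) P) :
    Integrable (fun z : ℝ × ℝ => A * |z.1| + B * |z.2| + C) ((gaussianReal 0 1).prod P) :=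
  (((prod_int_fst P).abs.const_mul A).add ((prod_int_snd h2).abs.const_mul B)).add
    (integrable_const _)

lemma pin_bound {τ : ℝ} (hτ : τ ∈ Set.Ioo (0 : ℝ) 1) {M b ρ A B C : ℝ} (hρ : 0 ≤ ρ)
    (hA : |M| ≤ A) (hB : |b| ≤ B) (hC : ρ ≤ C) (z : ℝ × ℝ) :
    ‖moreau (pinball τ) (M * z.1 + z.2 - b) ρ‖ ≤ A * |z.1| + 1 * |z.2| + (B + C) := by
  rw [Real.norm_eq_abs]
  refine (moreau_pin_abs hτ _ hρ).trans ?_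
  have h1 : |M * z.1 + z.2 - b| ≤ |M| * |z.1| + |z.2| + |b| := by
    calc |M * z.1 + z.2 - b| ≤ |M * z.1 + z.2| + |b| := abs_sub _ _
      _ ≤ |M * z.1| + |z.2| + |b| := by gcongr; exact abs_add_le _ _
      _ = _ := by rw [abs_mul]
  have h2 : |M| * |z.1| ≤ A * |z.1| := by gcongr
  linarith

lemma pin_int {τ : ℝ} (hτ : τ ∈ Set.Ioo (0 : ℝ) 1) (h2 : Integrable (fun x => x ^ 2) P)
    (M b : ℝ) {ρ : ℝ} (hρ : 0 ≤ ρ) :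
    Integrable (fun z : ℝ × ℝ => moreau (pinball τ) (M * z.1 + z.2 - b) ρ)
      ((gaussianReal 0 1).prod P) := by
  refine (bound_int |M| 1 (|b| + ρ) h2).mono' (pin_meas hτ M b hρ).aestronglyMeasurable ?_
  exact Filter.Eventually.of_forall fun z => pin_bound hτ hρ le_rfl le_rfl le_rfl z

end integrals

section objective

variable {τ γ : ℝ} (hτ : τ ∈ Set.Ioo (0 : ℝ) 1) (hγ : 0 < γ)
    {Pε Pβ : Measure ℝ} [IsProbabilityMeasure Pε] [IsProbabilityMeasure Pβ]
    (h2 : Integrable (fun x => x ^ 2) Pε)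
    {ν : ℝ → ℝ} (hν : ConvexOn ℝ Set.univ ν)
    (hνfin : ∀ (c ρ : ℝ), 0 ≤ ρ →
      Integrable (fun z : ℝ × ℝ => moreau ν (c * z.1 + γ * z.2) ρ)
        ((gaussianReal 0 1).prod Pβ))
    (hνcont : ContinuousOn
      (fun q : ℝ × ℝ =>
        ∫ z, moreau ν (q.1 * z.1 + γ * z.2) q.2 ∂((gaussianReal 0 1).prod Pβ))
      (Set.univ ×ˢ Set.Ici 0))
    {Cβ0 Cu C₁ C₂ cη Cη : ℝ} (hcη : 0 < cη)

include hτ h2 hνcont hcη in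
lemma obj_cont :
    ContinuousOn (fun w : (ℝ × ℝ × ℝ) × (ℝ × ℝ) =>
      asymObj τ γ Pε Pβ ν w.1.1 w.1.2.1 w.1.2.2 w.2.1 w.2.2)
      (asymBox Cβ0 Cu C₁ ×ˢ (Set.Icc cη Cη ×ˢ Set.Ioc (0 : ℝ) C₂)) := by
  unfold asymObj asymBox
  have hne : ∀ w ∈ ((Set.Icc (-Cβ0) Cβ0 ×ˢ Set.Icc (0 : ℝ) Cu ×ˢ Set.Icc (0 : ℝ) C₁) ×ˢ
      (Set.Icc cη Cη ×ˢ Set.Ioc (0 : ℝ) C₂)), w.2.2 ≠ 0 := fun w hw => hw.2.2.1.ne'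
  have hne' : ∀ w ∈ ((Set.Icc (-Cβ0) Cβ0 ×ˢ Set.Icc (0 : ℝ) Cu ×ˢ Set.Icc (0 : ℝ) C₁) ×ˢ
      (Set.Icc cη Cη ×ˢ Set.Ioc (0 : ℝ) C₂)), w.2.1 ≠ 0 :=
    fun w hw => (hcη.trans_le hw.2.1.1).ne'
  have hc2 : ContinuousOn (fun w : (ℝ × ℝ × ℝ) × (ℝ × ℝ) =>
      ∫ z, moreau ν (w.2.1 * w.1.2.1 / w.2.2 * z.1 + γ * z.2) (w.1.2.1 / w.2.2)
        ∂((gaussianReal 0 1).prod Pβ))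
      ((Set.Icc (-Cβ0) Cβ0 ×ˢ Set.Icc (0 : ℝ) Cu ×ˢ Set.Icc (0 : ℝ) C₁) ×ˢ
      (Set.Icc cη Cη ×ˢ Set.Ioc (0 : ℝ) C₂)) := by
    refine hνcont.comp (f := fun w : (ℝ × ℝ × ℝ) × (ℝ × ℝ) =>
      (w.2.1 * w.1.2.1 / w.2.2, w.1.2.1 / w.2.2)) ?_ ?_
    · exact ContinuousOn.prodMk (ContinuousOn.div (by fun_prop) (by fun_prop) hne)
        (ContinuousOn.div (by fun_prop) (by fun_prop) hne)
    · intro w hw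
      exact ⟨Set.mem_univ _, div_nonneg hw.1.2.1.1 hw.2.2.1.le⟩
  have hc1 : ContinuousOn (fun w : (ℝ × ℝ × ℝ) × (ℝ × ℝ) =>
      ∫ z, moreau (pinball τ) (w.1.2.1 * z.1 + z.2 - w.1.1) (w.1.2.2 / w.2.1)
        ∂((gaussianReal 0 1).prod Pε))
      ((Set.Icc (-Cβ0) Cβ0 ×ˢ Set.Icc (0 : ℝ) Cu ×ˢ Set.Icc (0 : ℝ) C₁) ×ˢ
      (Set.Icc cη Cη ×ˢ Set.Ioc (0 : ℝ) C₂)) := by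
    refine continuousOn_of_dominated (bound := fun z => Cu * |z.1| + 1 * |z.2| + (Cβ0 + C₁ / cη))
      ?_ ?_ (bound_int _ _ _ h2) ?_
    · intro w hw
      exact (pin_meas hτ _ _ (div_nonneg hw.1.2.2.1
        (hcη.trans_le hw.2.1.1).le)).aestronglyMeasurable
    · intro w hw
      refine Filter.Eventually.of_forall fun z => ?_
      have hm := hcη.trans_le hw.2.1.1
      refine pin_bound hτ (div_nonneg hw.1.2.2.1 hm.le) ?_ (abs_le.2 hw.1.1) ?_ z
      · rw [abs_of_nonneg hw.1.2.1.1]; exact hw.1.2.1.2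
      · exact div_le_div₀ (hw.1.2.2.1.trans hw.1.2.2.2) hw.1.2.2.2 hcη hw.2.1.1
    · refine Filter.Eventually.of_forall fun z => ?_
      refine (moreau_pin_continuousOn hτ).comp (f := fun w : (ℝ × ℝ × ℝ) × (ℝ × ℝ) =>
        (w.1.2.1 * z.1 + z.2 - w.1.1, w.1.2.2 / w.2.1)) ?_ ?_
      · exact ContinuousOn.prodMk (by fun_prop)
          (ContinuousOn.div (by fun_prop) (by fun_prop) hne')
      · intro w hw
        exact ⟨Set.mem_univ _, div_nonneg hw.1.2.2.1 (hcη.trans_le hw.2.1.1).le⟩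
  have hc3 : ContinuousOn (fun w : (ℝ × ℝ × ℝ) × (ℝ × ℝ) =>
      w.2.1 ^ 2 * w.1.2.1 * γ / (2 * w.2.2))
      ((Set.Icc (-Cβ0) Cβ0 ×ˢ Set.Icc (0 : ℝ) Cu ×ˢ Set.Icc (0 : ℝ) C₁) ×ˢ
      (Set.Icc cη Cη ×ˢ Set.Ioc (0 : ℝ) C₂)) :=
    ContinuousOn.div (by fun_prop) (by fun_prop)
      (fun w hw => mul_ne_zero two_ne_zero (hne w hw))
  exact (((hc1.sub hc3).add (hc2.const_mul γ)).add (by fun_prop)).sub (by fun_prop)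

include hνfin in
lemma nu_int (m M r : ℝ) (hM : 0 ≤ M) (hr : 0 < r) :
    Integrable (fun z : ℝ × ℝ => moreau ν (m * M / r * z.1 + γ * z.2) (M / r)
      - m ^ 2 * M / (2 * r) * z.1 ^ 2) ((gaussianReal 0 1).prod Pβ) :=
  (hνfin _ _ (by positivity)).sub ((prod_int_fst_sq Pβ).const_mul _)

include hνfin in
lemma obj_eq (b M ρ m r : ℝ) (hM : 0 ≤ M) (hr : 0 < r) :
    asymObj τ γ Pε Pβ ν b M ρ m r =
      (∫ z, moreau (pinball τ) (M * z.1 + z.2 - b) (ρ / m) ∂((gaussianReal 0 1).prod Pε))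
      + γ * (∫ z, (moreau ν (m * M / r * z.1 + γ * z.2) (M / r) - m ^ 2 * M / (2 * r) * z.1 ^ 2)
        ∂((gaussianReal 0 1).prod Pβ)) + m * ρ / 2 - M * r / 2 := by
  unfold asymObj
  rw [integral_sub (hνfin _ _ (by positivity)) ((prod_int_fst_sq Pβ).const_mul _),
    integral_const_mul, prod_fst_sq]
  ring

include hτ hγ h2 hν hνfin hcη in
lemma obj_concave (b M ρ : ℝ) (hM : 0 ≤ M) (hρ : 0 ≤ ρ) :
    ConcaveOn ℝ (Set.Icc cη Cη ×ˢ Set.Ioc (0 : ℝ) C₂)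
      (fun q : ℝ × ℝ => asymObj τ γ Pε Pβ ν b M ρ q.1 q.2) := by
  refine ⟨(convex_Icc _ _).prod (convex_Ioc _ _), ?_⟩
  rintro ⟨m₁, r₁⟩ hq₁ ⟨m₂, r₂⟩ hq₂ x y hx hy hxy
  have hm₁ : 0 < m₁ := hcη.trans_le hq₁.1.1
  have hm₂ : 0 < m₂ := hcη.trans_le hq₂.1.1
  have hr₁ : 0 < r₁ := hq₁.2.1
  have hr₂ : 0 < r₂ := hq₂.2.1
  have hm : 0 < x * m₁ + y * m₂ := by
    have := (convex_Ioi (0 : ℝ)) hm₁ hm₂ hx hy hxy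
    simpa using this
  have hr : 0 < x * r₁ + y * r₂ := by
    have := (convex_Ioi (0 : ℝ)) hr₁ hr₂ hx hy hxy
    simpa using this
  simp only [smul_eq_mul, Prod.smul_mk, Prod.mk_add_mk]
  rw [obj_eq hνfin _ _ _ _ _ hM hr₁, obj_eq hνfin _ _ _ _ _ hM hr₂, obj_eq hνfin _ _ _ _ _ hM hr]
  have k1 : x * (∫ z, moreau (pinball τ) (M * z.1 + z.2 - b) (ρ / m₁) ∂((gaussianReal 0 1).prod Pε))
      + y * (∫ z, moreau (pinball τ) (M * z.1 + z.2 - b) (ρ / m₂) ∂((gaussianReal 0 1).prod Pε))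
      ≤ ∫ z, moreau (pinball τ) (M * z.1 + z.2 - b) (ρ / (x * m₁ + y * m₂))
        ∂((gaussianReal 0 1).prod Pε) := by
    have i1 := pin_int hτ h2 M b (ρ := ρ / m₁) (by positivity)
    have i2 := pin_int hτ h2 M b (ρ := ρ / m₂) (by positivity)
    rw [← integral_const_mul, ← integral_const_mul,
      ← integral_add (i1.const_mul x) (i2.const_mul y)]
    refine integral_mono ((i1.const_mul x).add (i2.const_mul y))
      (pin_int hτ h2 M b (by positivity)) fun z => ?_
    exact moreau_concave_eta (pinball_convex τ) hx hy hxy hρ hm₁ hm₂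
  have i1 := nu_int hνfin m₁ M r₁ hM hr₁
  have i2 := nu_int hνfin m₂ M r₂ hM hr₂
  have k2 := integral_mono ((i1.const_mul x).add (i2.const_mul y))
      (nu_int hνfin (x * m₁ + y * m₂) M (x * r₁ + y * r₂) hM hr) fun z =>
      moreau_concave_rho hν hx hy hxy hM hr₁ hr₂
  simp only [Pi.add_apply] at k2
  rw [integral_add (i1.const_mul x) (i2.const_mul y), integral_const_mul, integral_const_mul] at k2
  have k3 := mul_le_mul_of_nonneg_left k2 hγ.le
  linarith

include hτ hγ h2 hν hνfin in
lemma obj_convex (m r : ℝ) (hm : 0 < m) (hr : 0 < r) :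
    ConvexOn ℝ (asymBox Cβ0 Cu C₁)
      (fun p : ℝ × ℝ × ℝ => asymObj τ γ Pε Pβ ν p.1 p.2.1 p.2.2 m r) := by
  refine ⟨(convex_Icc _ _).prod ((convex_Icc _ _).prod (convex_Icc _ _)), ?_⟩
  rintro ⟨b₁, M₁, ρ₁⟩ hp₁ ⟨b₂, M₂, ρ₂⟩ hp₂ x y hx hy hxy
  have hM₁ : 0 ≤ M₁ := hp₁.2.1.1
  have hM₂ : 0 ≤ M₂ := hp₂.2.1.1
  have hρ₁ : 0 ≤ ρ₁ := hp₁.2.2.1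
  have hρ₂ : 0 ≤ ρ₂ := hp₂.2.2.1
  simp only [smul_eq_mul, Prod.smul_mk, Prod.mk_add_mk]
  unfold asymObj
  have i1 := pin_int hτ h2 M₁ b₁ (ρ := ρ₁ / m) (by positivity)
  have i2 := pin_int hτ h2 M₂ b₂ (ρ := ρ₂ / m) (by positivity)
  have k1 := integral_mono (pin_int hτ h2 (x * M₁ + y * M₂) (x * b₁ + y * b₂)
      (ρ := (x * ρ₁ + y * ρ₂) / m) (by positivity)) ((i1.const_mul x).add (i2.const_mul y))
      fun z => by
        have := moreau_convex (pinball_convex τ) (x₁ := M₁ * z.1 + z.2 - b₁)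
          (x₂ := M₂ * z.1 + z.2 - b₂) (r₁ := ρ₁ / m) (r₂ := ρ₂ / m) hx hy hxy (by positivity)
          (by positivity)
        rw [show x * (M₁ * z.1 + z.2 - b₁) + y * (M₂ * z.1 + z.2 - b₂) =
          (x * M₁ + y * M₂) * z.1 + z.2 - (x * b₁ + y * b₂) by
            linear_combination z.2 * hxy,
          show x * (ρ₁ / m) + y * (ρ₂ / m) = (x * ρ₁ + y * ρ₂) / m by ring] at this
        exact this
  simp only [Pi.add_apply] at k1
  rw [integral_add (i1.const_mul x) (i2.const_mul y), integral_const_mul, integral_const_mul] at k1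
  have j1 := hνfin (m * M₁ / r) (M₁ / r) (by positivity)
  have j2 := hνfin (m * M₂ / r) (M₂ / r) (by positivity)
  have k2 := integral_mono (hνfin (m * (x * M₁ + y * M₂) / r) ((x * M₁ + y * M₂) / r)
      (by positivity)) ((j1.const_mul x).add (j2.const_mul y))
      fun z => by
        have := moreau_convex hν (x₁ := m * M₁ / r * z.1 + γ * z.2)
          (x₂ := m * M₂ / r * z.1 + γ * z.2) (r₁ := M₁ / r) (r₂ := M₂ / r) hx hy hxy (by positivity)
          (by positivity)
        rw [show x * (m * M₁ / r * z.1 + γ * z.2) + y * (m * M₂ / r * z.1 + γ * z.2) =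
          m * (x * M₁ + y * M₂) / r * z.1 + γ * z.2 by
            linear_combination γ * z.2 * hxy,
          show x * (M₁ / r) + y * (M₂ / r) = (x * M₁ + y * M₂) / r by ring] at this
        exact this
  simp only [Pi.add_apply] at k2
  rw [integral_add (j1.const_mul x) (j2.const_mul y), integral_const_mul, integral_const_mul] at k2
  have k3 := mul_le_mul_of_nonneg_left k2 hγ.le
  have k4 : m ^ 2 * (x * M₁ + y * M₂) * γ / (2 * r) =
    x * (m ^ 2 * M₁ * γ / (2 * r)) + y * (m ^ 2 * M₂ * γ / (2 * r)) := by ring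
  rw [k4]
  linarith

include hτ hγ h2 hν hνfin hcη in
lemma obj_bdd (b M ρ : ℝ) (hM : 0 ≤ M) (hρ : 0 ≤ ρ) :
    BddAbove ((fun q : ℝ × ℝ => asymObj τ γ Pε Pβ ν b M ρ q.1 q.2) ''
      (Set.Icc cη Cη ×ˢ Set.Ioc (0 : ℝ) C₂)) := by
  refine ⟨(∫ z, moreau (pinball τ) (M * z.1 + z.2 - b) 0 ∂((gaussianReal 0 1).prod Pε))
      + γ * (∫ z, moreau ν (0 * z.1 + γ * z.2) 0 ∂((gaussianReal 0 1).prod Pβ)) + Cη * ρ / 2, ?_⟩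
  rintro _ ⟨⟨m, r⟩, hq, rfl⟩
  have hm : 0 < m := hcη.trans_le hq.1.1
  have hr : 0 < r := hq.2.1
  have hmC : m ≤ Cη := hq.1.2
  simp only
  rw [obj_eq hνfin _ _ _ _ _ hM hr]
  have k1 := integral_mono (pin_int hτ h2 M b (ρ := ρ / m) (by positivity))
    (pin_int hτ h2 M b (ρ := 0) le_rfl) fun z => by
      have := moreau_le (pinball_convex τ) (M * z.1 + z.2 - b) (ρ := ρ / m) (by positivity)
        (M * z.1 + z.2 - b) (fun _ => rfl)
      simpa [moreau] using this
  have k2 := integral_mono (nu_int hνfin m M r hM hr) (hνfin 0 0 le_rfl) fun z => by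
      have := moreau_le hν (m * M / r * z.1 + γ * z.2) (ρ := M / r) (by positivity)
        (γ * z.2) (fun h => by
          have : M = 0 := by
            rcases div_eq_zero_iff.1 h with h | h
            · exact h
            · exact absurd h hr.ne'
          simp [this])
      have e : (m * M / r * z.1 + γ * z.2 - γ * z.2) ^ 2 / (2 * (M / r)) =
          m ^ 2 * M / (2 * r) * z.1 ^ 2 := by
        rcases hM.eq_or_lt with h | h
        · simp [← h]
        · field_simp
          ring
      rw [e] at this
      have e2 : moreau ν (0 * z.1 + γ * z.2) 0 = ν (γ * z.2) := by simp [moreau]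
      rw [e2]
      linarith
  have k3 := mul_le_mul_of_nonneg_left k2 hγ.le
  have k4 : m * ρ ≤ Cη * ρ := by gcongr
  have k5 : 0 ≤ M * r := by positivity
  linarith

end objective

section saddle

variable {τ γ : ℝ} (hτ : τ ∈ Set.Ioo (0 : ℝ) 1) (hγ : 0 < γ)
    {Pε Pβ : Measure ℝ} [IsProbabilityMeasure Pε] [IsProbabilityMeasure Pβ]
    (h2 : Integrable (fun x => x ^ 2) Pε)
    {ν : ℝ → ℝ} (hν : ConvexOn ℝ Set.univ ν)
    (hνfin : ∀ (c ρ : ℝ), 0 ≤ ρ →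
      Integrable (fun z : ℝ × ℝ => moreau ν (c * z.1 + γ * z.2) ρ)
        ((gaussianReal 0 1).prod Pβ))
    (hνcont : ContinuousOn
      (fun q : ℝ × ℝ =>
        ∫ z, moreau ν (q.1 * z.1 + γ * z.2) q.2 ∂((gaussianReal 0 1).prod Pβ))
      (Set.univ ×ˢ Set.Ici 0))
    {Cβ0 Cu C₁ C₂ cη Cη : ℝ} (hC₂ : 0 < C₂) (hcη : 0 < cη) (hcηCη : cη < Cη)

include hτ hγ h2 hν hνfin hνcont hC₂ hcη hcηCη in
lemma near_saddle {p : ℝ × ℝ × ℝ} (hp : p ∈ asymBox Cβ0 Cu C₁)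
    (hmin : IsMinOn (asymFmax τ γ Pε Pβ ν cη Cη C₂) (asymBox Cβ0 Cu C₁) p)
    {m : ℝ} (hm : m ∈ Set.Icc cη Cη)
    (hmax : IsMaxOn (asymG τ γ Pε Pβ ν Cβ0 Cu C₁ C₂) (Set.Icc cη Cη) m)
    {δ : ℝ} (hδ : 0 < δ) :
    ∃ r ∈ Set.Ioc (0 : ℝ) C₂, ∀ p' ∈ asymBox Cβ0 Cu C₁,
      asymObj τ γ Pε Pβ ν p.1 p.2.1 p.2.2 m r ≤
        asymObj τ γ Pε Pβ ν p'.1 p'.2.1 p'.2.2 m r + δ := by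
  set X := asymBox Cβ0 Cu C₁ with hX
  set Y := Set.Icc cη Cη ×ˢ Set.Ioc (0 : ℝ) C₂ with hY
  let f : ℝ × ℝ × ℝ → ℝ × ℝ → ℝ := fun p q => asymObj τ γ Pε Pβ ν p.1 p.2.1 p.2.2 q.1 q.2
  have hYne : Y.Nonempty := ⟨(cη, C₂), ⟨⟨le_rfl, hcηCη.le⟩, ⟨hC₂, le_rfl⟩⟩⟩
  have hcont : ContinuousOn (fun w : (ℝ × ℝ × ℝ) × (ℝ × ℝ) => f w.1 w.2) (X ×ˢ Y) :=
    obj_cont hτ h2 hνcont hcη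
  have hcx : ∀ q ∈ Y, ContinuousOn (fun p => f p q) X := by
    intro q hq
    exact hcont.comp (f := fun p => (p, q)) (by fun_prop) (fun p hp => ⟨hp, hq⟩)
  have hcy : ∀ p ∈ X, ContinuousOn (fun q => f p q) Y := by
    intro p hp
    exact hcont.comp (f := fun q => (p, q)) (by fun_prop) (fun q hq => ⟨hp, hq⟩)
  have kX : IsCompact X := isCompact_Icc.prod (isCompact_Icc.prod isCompact_Icc)
  have cvx : ∀ q ∈ Y, ConvexOn ℝ X fun p => f p q := fun q hq =>
    obj_convex hτ hγ h2 hν hνfin q.1 q.2 (hcη.trans_le hq.1.1) hq.2.1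
  have ccv : ∀ p ∈ X, ConcaveOn ℝ Y fun q => f p q := fun p hp =>
    obj_concave hτ hγ h2 hν hνfin hcη p.1 p.2.1 p.2.2 hp.2.1.1 hp.2.2.1
  have bdd : ∀ p ∈ X, BddAbove ((fun q => f p q) '' Y) := fun p hp =>
    obj_bdd hτ hγ h2 hν hνfin hcη p.1 p.2.1 p.2.2 hp.2.1.1 hp.2.2.1
  have cX : Convex ℝ X := (convex_Icc _ _).prod ((convex_Icc _ _).prod (convex_Icc _ _))
  have cY : Convex ℝ Y := (convex_Icc _ _).prod (convex_Ioc _ _)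
  have hXne : X.Nonempty := ⟨p, hp⟩
  set V := asymFmax τ γ Pε Pβ ν cη Cη C₂ p with hV
  have hV' : ∀ q ∈ Y, f p q ≤ V := fun q hq => le_csSup (bdd p hp) ⟨q, hq, rfl⟩
  -- minimax
  have hmm : ∀ t < V, ∃ q ∈ Y, ∀ p' ∈ X, t < f p' q := by
    intro t ht
    obtain ⟨t', htt', ht'⟩ := exists_between ht
    have hex : ∀ p' ∈ X, ∃ q ∈ Y, t' < f p' q := by
      intro p' hp'
      have h1 : t' < asymFmax τ γ Pε Pβ ν cη Cη C₂ p' := ht'.trans_le (hmin hp')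
      obtain ⟨_, ⟨q, hq, rfl⟩, h⟩ := exists_lt_of_lt_csSup (hYne.image _) h1
      exact ⟨q, hq, h⟩
    choose! Q hQ hQ' using hex
    have hnhds : ∀ p' ∈ X, {w | t' < f w (Q p')} ∈ nhdsWithin p' X := by
      intro p' hp'
      exact (hcx _ (hQ p' hp') p' hp').eventually (lt_mem_nhds (hQ' p' hp'))
    obtain ⟨T, hT, hcov⟩ := kX.elim_nhdsWithin_subcover _ hnhds
    obtain ⟨q, hq, h⟩ := Sion.exists_lt_iInf_of_lt_iInf_of_finite (X := X) (Y := Y) (f := f)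
      hXne kX (fun q hq => (hcx q hq).lowerSemicontinuousOn)
      (fun q hq => (cvx q hq).quasiconvexOn) cY
      (fun p hp => (hcy p hp).upperSemicontinuousOn)
      (fun p hp => (ccv p hp).quasiconcaveOn) cX
      (s := Q '' (T : Set (ℝ × ℝ × ℝ))) (T.finite_toSet.image _)
      (by rintro _ ⟨x, hx, rfl⟩; exact hQ x (hT x hx)) (t := t')
      (by
        intro x hx
        have := hcov hx
        simp only [Set.mem_iUnion] at this
        obtain ⟨y, hy, hxy⟩ := this
        exact ⟨Q y, ⟨y, hy, rfl⟩, hxy⟩)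
    exact ⟨q, hq, fun p' hp' => htt'.trans (h p' hp')⟩
  have bddb : ∀ q ∈ Y, BddBelow ((fun p => f p q) '' X) := fun q hq =>
    kX.bddBelow_image (hcx q hq)
  have bG : ∀ m' ∈ Set.Icc cη Cη, BddAbove ((fun ρ₂ =>
      sInf ((fun p : ℝ × ℝ × ℝ => asymObj τ γ Pε Pβ ν p.1 p.2.1 p.2.2 m' ρ₂) '' X))
        '' Set.Ioc (0 : ℝ) C₂) := by
    intro m' hm'
    refine ⟨V, ?_⟩
    rintro _ ⟨r, hr, rfl⟩
    exact (csInf_le (bddb (m', r) ⟨hm', hr⟩) ⟨p, hp, rfl⟩).trans (hV' (m', r) ⟨hm', hr⟩)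
  have hGV : V - δ / 2 ≤ asymG τ γ Pε Pβ ν Cβ0 Cu C₁ C₂ m := by
    obtain ⟨q, hq, h⟩ := hmm (V - δ / 2) (by linarith)
    have h1 : asymG τ γ Pε Pβ ν Cβ0 Cu C₁ C₂ q.1 ≤ asymG τ γ Pε Pβ ν Cβ0 Cu C₁ C₂ m :=
      hmax hq.1
    refine le_trans ?_ h1
    refine le_trans ?_ (le_csSup (bG q.1 hq.1) ⟨q.2, hq.2, rfl⟩)
    refine le_csInf (hXne.image _) ?_
    rintro _ ⟨p', hp', rfl⟩
    exact (h p' hp').le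
  obtain ⟨_, ⟨r, hr, rfl⟩, h⟩ := exists_lt_of_lt_csSup
    (show ((fun ρ₂ =>
      sInf ((fun p : ℝ × ℝ × ℝ => asymObj τ γ Pε Pβ ν p.1 p.2.1 p.2.2 m ρ₂) '' X))
        '' Set.Ioc (0 : ℝ) C₂).Nonempty from ⟨_, C₂, ⟨hC₂, le_rfl⟩, rfl⟩)
    (show V - δ < _ from lt_of_lt_of_le (by linarith) hGV)
  refine ⟨r, hr, fun p' hp' => ?_⟩
  have e1 := hV' (m, r) ⟨hm, hr⟩
  have e2 := csInf_le (bddb (m, r) ⟨hm, hr⟩) ⟨p', hp', rfl⟩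
  simp only [f] at e1 e2 h
  linarith

end saddle

section foc

variable {τ : ℝ} (hτ : τ ∈ Set.Ioo (0 : ℝ) 1)
    {Pε : Measure ℝ} [IsProbabilityMeasure Pε]
    (h2 : Integrable (fun x => x ^ 2) Pε)

lemma clip_cont (τ M b ρ : ℝ) :
    Continuous (fun z : ℝ × ℝ => (clipS τ (M * z.1 + z.2 - b) ρ) ^ 2) := by
  unfold clipS; fun_prop

include hτ in
lemma clip_sq_norm (x ρ : ℝ) : ‖(clipS τ x ρ) ^ 2‖ ≤ 1 := by
  rw [Real.norm_eq_abs, abs_of_nonneg (sq_nonneg _)]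
  exact (sq_le_one_iff_abs_le_one _).2 (abs_le_one_of_mem hτ (clipS_mem τ x ρ))

include hτ in
lemma clip_int (M b ρ : ℝ) :
    Integrable (fun z : ℝ × ℝ => (clipS τ (M * z.1 + z.2 - b) ρ) ^ 2)
      ((gaussianReal 0 1).prod Pε) :=
  (integrable_const (1 : ℝ)).mono' (clip_cont τ M b ρ).aestronglyMeasurable
    (Filter.Eventually.of_forall fun _ => clip_sq_norm hτ _ _)

include hτ in
lemma clip_integral_cont (M b : ℝ) {ρ : ℝ} (hρ : 0 < ρ) :
    ContinuousAt (fun ρ => ∫ z, (clipS τ (M * z.1 + z.2 - b) ρ) ^ 2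
      ∂((gaussianReal 0 1).prod Pε)) ρ := by
  refine continuousAt_of_dominated (bound := fun _ => 1) ?_ ?_ (integrable_const _) ?_
  · exact Filter.Eventually.of_forall fun r => (clip_cont τ M b r).aestronglyMeasurable
  · exact Filter.Eventually.of_forall fun r =>
      Filter.Eventually.of_forall fun _ => clip_sq_norm hτ _ _
  · refine Filter.Eventually.of_forall fun z => ?_
    unfold clipS
    have : ContinuousAt (fun r : ℝ => (M * z.1 + z.2 - b) / r) ρ :=
      continuousAt_const.div continuousAt_id hρ.ne'
    exact (continuousAt_const.max (this.min continuousAt_const)).pow 2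

include hτ h2 in
/-- one-sided derivative bound. -/
lemma pin_diff (M b : ℝ) {ρ r : ℝ} (hρ : 0 ≤ ρ) (hr : 0 < r) :
    (∫ z, moreau (pinball τ) (M * z.1 + z.2 - b) r ∂((gaussianReal 0 1).prod Pε)) +
      (r - ρ) / 2 * (∫ z, (clipS τ (M * z.1 + z.2 - b) r) ^ 2 ∂((gaussianReal 0 1).prod Pε)) ≤
    ∫ z, moreau (pinball τ) (M * z.1 + z.2 - b) ρ ∂((gaussianReal 0 1).prod Pε) := by
  rw [← integral_const_mul, ← integral_add (pin_int hτ h2 M b hr.le)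
    ((clip_int hτ M b r).const_mul _)]
  refine integral_mono ((pin_int hτ h2 M b hr.le).add ((clip_int hτ M b r).const_mul _))
    (pin_int hτ h2 M b hρ) fun z => ?_
  simp only
  rw [moreau_pin_eq hτ hr]
  have := moreau_pin_ge (clipS_mem τ (M * z.1 + z.2 - b) r) (M * z.1 + z.2 - b) hρ
  linarith

include hτ h2 in
lemma fixed_point_of_min (h0 : ∫ x, x ∂Pε = 0) {b M ρ m Cβ0 Cu C₁ : ℝ} (hm0 : 0 < m)
    (hp : (b, M, ρ) ∈ asymBox Cβ0 Cu C₁)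
    (hbest : ∀ ρ' ∈ Set.Icc (0 : ℝ) C₁,
      (∫ z, moreau (pinball τ) (M * z.1 + z.2 - b) (ρ / m) ∂((gaussianReal 0 1).prod Pε))
        + m * ρ / 2 ≤
      (∫ z, moreau (pinball τ) (M * z.1 + z.2 - b) (ρ' / m) ∂((gaussianReal 0 1).prod Pε))
        + m * ρ' / 2)
    (hC₁' : Real.sqrt (Cu ^ 2 + (∫ x, x ^ 2 ∂Pε) + Cβ0 ^ 2) < C₁) :
    ρ = Real.sqrt (∫ z, (M * z.1 + z.2 - b
          - proxPinball τ (M * z.1 + z.2 - b) (ρ / m)) ^ 2 ∂((gaussianReal 0 1).prod Pε)) := by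
  have hρ0 : 0 ≤ ρ := hp.2.2.1
  have hρC : ρ ≤ C₁ := hp.2.2.2
  rcases hρ0.eq_or_lt with h | hρ
  · subst h
    have : ∀ x : ℝ, x - proxPinball τ x (0 / m) = 0 := by
      intro x
      unfold proxPinball
      simp only [zero_div, zero_mul, sub_zero, neg_zero, add_zero]
      split_ifs with h1 h2
      · ring
      · ring
      · linarith
    simp only [this]
    simp
  have hρm : 0 < ρ / m := by positivity
  simp only [sub_prox hρm, mul_pow]
  rw [integral_const_mul]
  let S : ℝ → ℝ := fun r => ∫ z, (clipS τ (M * z.1 + z.2 - b) (r / m)) ^ 2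
    ∂((gaussianReal 0 1).prod Pε)
  have hScont : ContinuousAt S ρ := by
    have h1 := clip_integral_cont hτ (Pε := Pε) M b hρm
    exact ContinuousAt.comp (f := fun r : ℝ => r / m) h1 (by fun_prop)
  have key : ∀ r ∈ Set.Icc (0 : ℝ) C₁, 0 < r → 0 ≤ (r - ρ) * (m ^ 2 - S r) := by
    intro r hr hr0
    have e1 := hbest r hr
    have e2 := pin_diff hτ h2 (Pε := Pε) M b (ρ := ρ / m) (r := r / m) hρm.le (by positivity)
    have e3 : 0 ≤ m * (r - ρ) / 2 - (r / m - ρ / m) / 2 * S r := by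
      simp only [S]; linarith
    have e4 : (r - ρ) * (m ^ 2 - S r) =
        2 * m * (m * (r - ρ) / 2 - (r / m - ρ / m) / 2 * S r) := by
      field_simp
    rw [e4]; positivity
  have hge : m ^ 2 ≤ S ρ := by
    refine ge_of_tendsto (hScont.tendsto.mono_left (nhdsWithin_le_nhds (s := Set.Iio ρ))) ?_
    have : Set.Ioo 0 ρ ∈ nhdsWithin ρ (Set.Iio ρ) := Ioo_mem_nhdsLT hρ
    filter_upwards [this] with r hr
    have := key r ⟨hr.1.le, hr.2.le.trans hρC⟩ hr.1
    by_contra hlt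
    push Not at hlt
    nlinarith [mul_pos (sub_pos.2 hr.2) (sub_pos.2 hlt)]
  have hclip : (ρ / m) ^ 2 * S ρ ≤ M ^ 2 + (∫ x, x ^ 2 ∂Pε) + b ^ 2 := by
    obtain ⟨i1, i2⟩ := int_sq_expand M b h2 h0
    rw [← i2, ← integral_const_mul]
    refine integral_mono ((clip_int hτ M b (ρ / m)).const_mul _) i1 fun z => ?_
    simp only
    rw [← mul_pow, ← sub_prox hρm]
    set x := M * z.1 + z.2 - b
    have t0 := hτ.1
    have t1 := hτ.2
    have ht : 0 < ρ / m * τ := by positivity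
    have ht' : 0 < ρ / m * (1 - τ) := mul_pos hρm (by linarith)
    apply sq_le_sq.2
    unfold proxPinball
    split_ifs with h1 h2
    · rw [abs_of_pos (by linarith), abs_of_pos (by linarith)]; linarith
    · rw [abs_of_neg (by linarith), abs_of_neg (by linarith)]; linarith
    · simp
  have hlt : ρ < C₁ := by
    rcases hρC.eq_or_lt with h | h
    · exfalso
      have hC0 : 0 < C₁ := h ▸ hρ
      have e1 := (Real.sqrt_lt' hC0).1 hC₁'
      have e2 : M ^ 2 ≤ Cu ^ 2 := by
        have := hp.2.1.1; have := hp.2.1.2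
        exact pow_le_pow_left₀ (by assumption) (by assumption) 2
      have e3 : b ^ 2 ≤ Cβ0 ^ 2 := by
        have h1 := hp.1.1; have h2 := hp.1.2
        simp only at h1 h2
        nlinarith
      have e4 : ρ ^ 2 ≤ (ρ / m) ^ 2 * S ρ := by
        calc ρ ^ 2 = (ρ / m) ^ 2 * m ^ 2 := by field_simp
          _ ≤ _ := by gcongr
      rw [h] at e4 hclip
      linarith
    · exact h
  have hle : S ρ ≤ m ^ 2 := by
    refine le_of_tendsto (hScont.tendsto.mono_left (nhdsWithin_le_nhds (s := Set.Ioi ρ))) ?_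
    have : Set.Ioo ρ C₁ ∈ nhdsWithin ρ (Set.Ioi ρ) := Ioo_mem_nhdsGT hlt
    filter_upwards [this] with r hr
    have := key r ⟨hρ0.trans hr.1.le, hr.2.le⟩ (hρ.trans hr.1)
    by_contra hlt
    push Not at hlt
    nlinarith [mul_pos (sub_pos.2 hr.1) (sub_pos.2 hlt)]
  have hS : S ρ = m ^ 2 := le_antisymm hle hge
  change ρ = Real.sqrt ((ρ / m) ^ 2 * S ρ)
  rw [hS, ← mul_pow, div_mul_cancel₀ _ hm0.ne', Real.sqrt_sq hρ0]

end foc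

/-- Lemma 15 of the paper, first-order characterization of `ρ₁*`.  Fix
constants with `C_η > c_η`, `c_η < √((1/2)·min{τ²,(1−τ)²})` and
`C₁ > √(C_u² + E[ε₁²] + C_{β₀}²)`.  If `(β₀*, M_u*, ρ₁*)` is the unique minimizing triple of the
asymptotic program with `M_u* > 0`, and `M_η*` is the unique optimal `M_η`, then `ρ₁*` satisfies
`ρ₁* = √(E[(M_u* g₁ + ε₁ − β₀* − prox_{ℓ_τ}(M_u* g₁ + ε₁ − β₀*; ρ₁*/M_η*))²])`. -/
theorem asym_rho1_fixed_point
    (τ γ : ℝ) (hτ : τ ∈ Set.Ioo (0 : ℝ) 1) (hγ : γ ∈ Set.Ioo (0 : ℝ) (2 / Real.pi))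
    (Pε Pβ : Measure ℝ) [IsProbabilityMeasure Pε] [IsProbabilityMeasure Pβ]
    (hPε : NoiseAssumption Pε) (hPβ2 : Integrable (fun x => x ^ 2) Pβ)
    (ν : ℝ → ℝ) (hν : ConvexOn ℝ Set.univ ν)
    (hνfin : ∀ (c ρ : ℝ), 0 ≤ ρ →
      Integrable (fun z : ℝ × ℝ => moreau ν (c * z.1 + γ * z.2) ρ)
        ((gaussianReal 0 1).prod Pβ))
    (hνcont : ContinuousOn
      (fun q : ℝ × ℝ =>
        ∫ z, moreau ν (q.1 * z.1 + γ * z.2) q.2 ∂((gaussianReal 0 1).prod Pβ))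
      (Set.univ ×ˢ Set.Ici 0))
    (hνconj : ConjDerivAssumption γ Pβ ν)
    (Cβ0 Cu C₁ C₂ cη Cη : ℝ)
    (hCβ0 : 0 < Cβ0) (hCu : 0 < Cu) (hC₁ : 0 < C₁) (hC₂ : 0 < C₂)
    (hcη : 0 < cη) (hcηCη : cη < Cη)
    (hcη' : cη < Real.sqrt ((1 / 2) * min (τ ^ 2) ((1 - τ) ^ 2)))
    (hC₁' : Real.sqrt (Cu ^ 2 + (∫ x, x ^ 2 ∂Pε) + Cβ0 ^ 2) < C₁) :
    ∀ p ∈ asymBox Cβ0 Cu C₁,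
      IsMinOn (asymFmax τ γ Pε Pβ ν cη Cη C₂) (asymBox Cβ0 Cu C₁) p →
      0 < p.2.1 →
      ∀ Mη ∈ Set.Icc cη Cη,
        IsMaxOn (asymG τ γ Pε Pβ ν Cβ0 Cu C₁ C₂) (Set.Icc cη Cη) Mη →
        p.2.2 = Real.sqrt (∫ z, (p.2.1 * z.1 + z.2 - p.1
          - proxPinball τ (p.2.1 * z.1 + z.2 - p.1) (p.2.2 / Mη)) ^ 2
            ∂((gaussianReal 0 1).prod Pε)) := by
  rintro ⟨b, M, ρ⟩ hp hmin hM m hm hmax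
  simp only at hM ⊢
  have hM0 : 0 ≤ M := hp.2.1.1
  have hρ0 : 0 ≤ ρ := hp.2.2.1
  have hm0 : 0 < m := hcη.trans_le hm.1
  have h2 := hPε.second_moment
  have hbest : ∀ ρ' ∈ Set.Icc (0 : ℝ) C₁,
      (∫ z, moreau (pinball τ) (M * z.1 + z.2 - b) (ρ / m) ∂((gaussianReal 0 1).prod Pε))
        + m * ρ / 2 ≤
      (∫ z, moreau (pinball τ) (M * z.1 + z.2 - b) (ρ' / m) ∂((gaussianReal 0 1).prod Pε))
        + m * ρ' / 2 := by
    intro ρ' hρ'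
    apply le_of_forall_pos_le_add
    intro δ hδ
    obtain ⟨r, hr, H⟩ := near_saddle hτ hγ.1 h2 hν hνfin hνcont hC₂ hcη hcηCη hp hmin hm hmax hδ
    have := H (b, M, ρ') ⟨hp.1, hp.2.1, hρ'⟩
    unfold asymObj at this
    simp only at this
    linarith
  exact fixed_point_of_min hτ h2 hPε.mean_zero hm0 hp hbest hC₁'

end
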